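/- Let f ∈ ℂ{z} be a convergent power series (radius of convergence > 0), let (μ,K) ∈ ℚ_{>0} × ℕ* with K ∈ μℕ*, and let λ ∈ ℂ*. Then the q-Borel transform B̂_μ(f) defines an entire function that belongs to ℍ^{[λ]}_{μ,K}, and L^{[λ]}_{μ,K}(B̂_μ(f))(z) = f(z) for all z in a punctured neighborhood of 0 with z ∉ −λq^{K^{−1}ℤ}. -/

import Mathlib

/-- The Jacobi theta function `Θ_q(z) = ∑_{ℓ ∈ ℤ} q^{-ℓ(ℓ+1)/2} z^ℓ`. -/
noncomputable def theta (q z : ℂ) : ℂ := ∑' ℓ : ℤ, q ^ (-(ℓ * (ℓ + 1) / 2)) * z ^ ℓ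

/-- The real theta function `Θ_Q(x) = ∑_{ℓ ∈ ℤ} Q^{-ℓ(ℓ+1)/2} x^ℓ` for real `Q, x`;
for `Q > 1` and `x > 0` it is a positive real number. -/
noncomputable def thetaR (Q x : ℝ) : ℝ := ∑' ℓ : ℤ, Q ^ (-(ℓ * (ℓ + 1) / 2)) * x ^ ℓ

/-- Rational powers `q^α := exp(α log q)` of a complex number, via the principal logarithm. -/
noncomputable def qpow (q : ℂ) (α : ℚ) : ℂ := Complex.exp ((α : ℂ) * Complex.log q)

/-- Rational (real) powers `b^α` for a real base. -/
noncomputable def qpowR (b : ℝ) (α : ℚ) : ℝ := b ^ (α : ℝ)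

/-- The `ε`-neighborhood of the discrete `q^{1/K}`-spiral `λ q^{K⁻¹ℤ}` in `ℂ*`:
`∪_{ℓ∈K⁻¹ℤ} {z ∈ ℂ* : |z - q^ℓ λ| < ε |q^ℓ λ|}`. -/
def spiralNhd (q lam : ℂ) (K : ℕ) (ε : ℝ) : Set ℂ :=
  {z : ℂ | z ≠ 0 ∧ ∃ j : ℤ,
    ‖z - qpow q ((j : ℚ) / K) * lam‖ < ε * ‖qpow q ((j : ℚ) / K) * lam‖}

/-- Membership in the space `ℍ^{[λ]}_{μ,K}`: `f` is meromorphic on a punctured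
neighborhood of `0` in `ℂ*` and can be continued analytically to a connected domain `Ω`
containing an `ε`-neighborhood of the spiral `λ q^{K⁻¹ℤ}`, with
`q^{1/μ}`-exponential growth of order 1 at infinity:
`|f(z)| < L·Θ_{|q|^{1/μ}}(M|z|)` on `Ω`. -/
def memH (q : ℂ) (μ : ℚ) (K : ℕ) (lam : ℂ) (f : ℂ → ℂ) : Prop :=
  (∃ r > 0, MeromorphicOn f {z : ℂ | z ≠ 0 ∧ ‖z‖ < r}) ∧
  ∃ ε > 0, ∃ Ω : Set ℂ, IsOpen Ω ∧ IsConnected Ω ∧ spiralNhd q lam K ε ⊆ Ω ∧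
    AnalyticOnNhd ℂ f Ω ∧
    ∃ L > 0, ∃ M > 0, ∀ z ∈ Ω, ‖f z‖ < L * thetaR (qpowR ‖q‖ (1 / μ)) (M * ‖z‖)

/-- The `q`-Laplace transform of order `μ` in the direction `λ`:
`L^{[λ]}_{μ,K}(f)(z) = (μ/K) ∑_{ℓ∈K⁻¹ℤ} f(q^ℓ λ) / Θ_{q^{1/μ}}(q^{1/μ+ℓ} λ / z)`. -/
noncomputable def qLaplace (q : ℂ) (μ : ℚ) (K : ℕ) (lam : ℂ) (f : ℂ → ℂ) (z : ℂ) : ℂ :=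
  ((μ : ℂ) / (K : ℂ)) * ∑' j : ℤ, f (qpow q ((j : ℚ) / K) * lam) /
    theta (qpow q (1 / μ)) (qpow q (1 / μ + (j : ℚ) / K) * lam / z)

/-!
The theta function is quasi-periodic: `Θ_p(p ^ i w) = p ^ (i (i - 1) / 2) w ^ i Θ_p(w)`. With
`p = q ^ (1 / μ)` and `w = λ / z`, this turns the `i`-th term of the `q`-Laplace sum of the
`q`-Borel transform of `zⁿ` into `zⁿ` times the term of index `n - 1 - i` of the series `Θ_p(w)`,
divided by `Θ_p(w)`. Summing over `i : ℤ` gives `zⁿ`, and absolute convergence of the double series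
extends this to `f`. The spiral `λ q ^ (K⁻¹ ℤ)` is the disjoint union of `m = K / μ` spirals of
ratio `p`, each contributing `f z`, whence the normalization `μ / K = 1 / m`.

That `Θ_p` does not vanish off `-p ^ ℤ` follows from the Jacobi triple product, the limit `N → ∞`
of the Laurent expansion, with Gaussian binomial coefficients, of the product
`(-x t; t)_N (-1 / x; t)_N`, where `t = 1 / p`.

The `q`-Borel transform satisfies the growth bound because its `n`-th term is dominated by a
constant multiple of the term of index `n` of `Θ_{|p|}`.
-/

open Filter Finset Topology

/-- The `l`-th triangular number `l (l + 1) / 2`, for an integer `l`; the division is exact. -/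
def triangular (l : ℤ) : ℤ := l * (l + 1) / 2

lemma two_mul_triangular (l : ℤ) : 2 * triangular l = l * (l + 1) :=
  Int.mul_ediv_cancel' (Int.even_mul_succ_self l).two_dvd

lemma triangular_add_one (l : ℤ) : triangular (l + 1) = triangular l + (l + 1) := by
  linarith [two_mul_triangular l, two_mul_triangular (l + 1)]

lemma triangular_sub_one (l : ℤ) : triangular (l - 1) = triangular l - l := by
  linarith [two_mul_triangular l, two_mul_triangular (l - 1)]

lemma triangular_neg_add_one (l : ℤ) : triangular (-(l + 1)) = triangular l := by
  linarith [two_mul_triangular l, two_mul_triangular (-(l + 1))]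

lemma triangular_sub (l i : ℤ) :
    triangular (l - i) = triangular l - i * l + triangular (i - 1) := by
  linarith [two_mul_triangular l, two_mul_triangular (l - i), two_mul_triangular (i - 1)]

section Summability

lemma summable_pow_triangular_mul_pow {t x : ℝ} (ht₀ : 0 < t) (ht : t < 1) (hx : 0 < x) :
    Summable fun n : ℕ => t ^ triangular n * x ^ n := by
  refine summable_of_ratio_test_tendsto_lt_one zero_lt_one
    (Eventually.of_forall fun n => by positivity) ?_
  have hratio : Tendsto (fun n : ℕ => t ^ (n + 1) * x) atTop (𝓝 0) := by
    simpa using (((tendsto_pow_atTop_nhds_zero_of_lt_one ht₀.le ht).comp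
      (tendsto_add_atTop_nat 1)).mul_const x)
  refine hratio.congr fun n => ?_
  rw [Real.norm_of_nonneg (by positivity), Real.norm_of_nonneg (by positivity), Nat.cast_succ,
    triangular_add_one, zpow_add₀ ht₀.ne', eq_div_iff (by positivity), pow_succ x]
  norm_cast
  ring

lemma summable_zpow_triangular_mul_zpow {t x : ℝ} (ht₀ : 0 < t) (ht : t < 1) (hx : 0 < x) :
    Summable fun l : ℤ => t ^ triangular l * x ^ l := by
  refine Summable.of_nat_of_neg_add_one ?_ ?_
  · simpa only [zpow_natCast] using summable_pow_triangular_mul_pow ht₀ ht hx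
  · refine ((summable_pow_triangular_mul_pow ht₀ ht (inv_pos.2 hx)).mul_left x⁻¹).congr fun n => ?_
    rw [triangular_neg_add_one, zpow_neg, ← inv_zpow, zpow_add_one₀ (inv_pos.2 hx).ne',
      zpow_natCast]
    ring

lemma summable_norm_zpow_triangular_mul_zpow {𝕜 : Type*} [NormedField 𝕜] {t : 𝕜} (ht₀ : t ≠ 0)
    (ht : ‖t‖ < 1) (x : 𝕜) : Summable fun l : ℤ => ‖t ^ triangular l * x ^ l‖ := by
  rcases eq_or_ne x 0 with rfl | hx
  · refine summable_of_ne_finset_zero (s := {0}) fun l hl => ?_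
    rw [zero_zpow l (by simpa using hl), mul_zero, norm_zero]
  · simpa only [norm_mul, norm_zpow] using
      summable_zpow_triangular_mul_zpow (norm_pos_iff.2 ht₀) ht (norm_pos_iff.2 hx)

end Summability

/-- The finite `q`-Pochhammer symbol `(a; t)_n = ∏_{k < n} (1 - a t ^ k)`. -/
def qPochhammer {R : Type*} [CommRing R] (a t : R) (n : ℕ) : R := ∏ k ∈ range n, (1 - a * t ^ k)

/-- The infinite `q`-Pochhammer symbol `(a; t)_∞ = ∏_k (1 - a t ^ k)`, meaningful for `‖t‖ < 1`. -/
noncomputable def qPochhammerInf {R : Type*} [CommRing R] [TopologicalSpace R] (a t : R) : R :=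
  ∏' k : ℕ, (1 - a * t ^ k)

/-- The reciprocal `1 / (t; t)_n` for an integer index `n`, equal to `0` for `n < 0`: this is the
convention under which `recipQPochhammer_sub_one` holds for every `n : ℤ`. -/
def recipQPochhammer {F : Type*} [Field F] (t : F) (n : ℤ) : F :=
  if 0 ≤ n then (qPochhammer t t n.toNat)⁻¹ else 0

/-- The Gaussian binomial coefficient `(t; t)_n / ((t; t)_k (t; t)_{n - k})` with lower index
`k : ℤ`, equal to `0` unless `0 ≤ k ≤ n`. It is the usual one when `t` is not a root of unity. -/
def gaussianBinom {F : Type*} [Field F] (t : F) (n : ℕ) (k : ℤ) : F :=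
  qPochhammer t t n * recipQPochhammer t k * recipQPochhammer t (n - k)

/-- The term of degree `l` in `x` of the expanded product `(-x t; t)_M (-1/x; t)_N`. -/
def finiteTripleTerm {F : Type*} [Field F] (t x : F) (M N : ℕ) (l : ℤ) : F :=
  gaussianBinom t (M + N) (N + l) * (t ^ triangular l * x ^ l)

lemma qPochhammer_succ {R : Type*} [CommRing R] (a t : R) (n : ℕ) :
    qPochhammer a t (n + 1) = qPochhammer a t n * (1 - a * t ^ n) :=
  prod_range_succ ..

section GaussianBinomial

variable {F : Type*} [Field F] {t : F}

lemma one_sub_mul_pow_ne_zero (ht : ¬IsOfFinOrder t) (n : ℕ) : 1 - t * t ^ n ≠ 0 := fun h =>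
  ht (isOfFinOrder_iff_pow_eq_one.2 ⟨n + 1, n.succ_pos, by linear_combination -h⟩)

lemma recipQPochhammer_sub_one (ht : ¬IsOfFinOrder t) (n : ℤ) :
    recipQPochhammer t (n - 1) = recipQPochhammer t n * (1 - t ^ n) := by
  rcases n with (_ | n) | n
  · simp [recipQPochhammer]
  · have hfactor := one_sub_mul_pow_ne_zero ht n
    have hpred : ((n + 1 : ℕ) : ℤ) - 1 = n := by simp
    rw [Int.ofNat_eq_natCast, hpred, zpow_natCast, recipQPochhammer, recipQPochhammer,
      if_pos (Int.natCast_nonneg _), if_pos (Int.natCast_nonneg _), Int.toNat_natCast,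
      Int.toNat_natCast, qPochhammer_succ, pow_succ', mul_inv, inv_mul_cancel_right₀ hfactor]
  · rw [recipQPochhammer, recipQPochhammer, if_neg (by lia), if_neg (by lia), zero_mul]

lemma gaussianBinom_zero (k : ℤ) : gaussianBinom t 0 k = if k = 0 then 1 else 0 := by
  rcases lt_trichotomy k 0 with hk | rfl | hk
  · simp [gaussianBinom, recipQPochhammer, hk.not_ge, hk.ne]
  · simp [gaussianBinom, recipQPochhammer, qPochhammer]
  · simp [gaussianBinom, recipQPochhammer, hk.not_ge, hk.ne']

lemma gaussianBinom_symm (n : ℕ) (k : ℤ) : gaussianBinom t n (n - k) = gaussianBinom t n k := by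
  rw [gaussianBinom, gaussianBinom, sub_sub_cancel, mul_right_comm]

lemma gaussianBinom_succ (ht₀ : t ≠ 0) (ht : ¬IsOfFinOrder t) (n : ℕ) (k : ℤ) :
    gaussianBinom t (n + 1) k =
      gaussianBinom t n k + t ^ (n + 1 - k) * gaussianBinom t n (k - 1) := by
  have hk := recipQPochhammer_sub_one ht k
  have hnk := recipQPochhammer_sub_one ht (n + 1 - k)
  have hsplit : t * t ^ n = t ^ (n + 1 - k) * t ^ k := by
    rw [← zpow_add₀ ht₀, sub_add_cancel, zpow_add_one₀ ht₀, zpow_natCast, mul_comm]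
  rw [show (n + 1 - k - 1 : ℤ) = n - k by ring] at hnk
  rw [gaussianBinom, gaussianBinom, gaussianBinom, qPochhammer_succ, hk, hnk, hsplit, Nat.cast_succ,
    show (n - (k - 1) : ℤ) = n + 1 - k by ring]
  ring

lemma gaussianBinom_succ' (ht₀ : t ≠ 0) (ht : ¬IsOfFinOrder t) (n : ℕ) (k : ℤ) :
    gaussianBinom t (n + 1) k = gaussianBinom t n (k - 1) + t ^ k * gaussianBinom t n k := by
  rw [← gaussianBinom_symm, gaussianBinom_succ ht₀ ht, ← gaussianBinom_symm n (k - 1),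
    ← gaussianBinom_symm n k, Nat.cast_succ]
  ring_nf

lemma finiteTripleTerm_succ_left (ht₀ : t ≠ 0) (ht : ¬IsOfFinOrder t) {x : F} (hx : x ≠ 0)
    (M N : ℕ) (l : ℤ) :
    finiteTripleTerm t x (M + 1) N l =
      finiteTripleTerm t x M N l + x * t ^ (M + 1) * finiteTripleTerm t x M N (l - 1) := by
  have hexp : t ^ (M + 1 - l : ℤ) * t ^ triangular l = t ^ (M + 1) * t ^ triangular (l - 1) := by
    rw [triangular_sub_one, ← zpow_natCast, ← zpow_add₀ ht₀, ← zpow_add₀ ht₀]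
    congr 1
    push_cast
    ring
  have hindex : ((M + N : ℕ) + 1 - (N + l) : ℤ) = M + 1 - l := by
    push_cast
    ring
  simp only [finiteTripleTerm, Nat.add_right_comm M 1 N, gaussianBinom_succ ht₀ ht, hindex,
    zpow_sub_one₀ hx, ← add_sub_assoc]
  linear_combination gaussianBinom t (M + N) (N + l - 1) * x ^ l * hexp -
    gaussianBinom t (M + N) (N + l - 1) * x ^ l * t ^ (M + 1) * t ^ triangular (l - 1) *
      mul_inv_cancel₀ hx

lemma finiteTripleTerm_succ_right (ht₀ : t ≠ 0) (ht : ¬IsOfFinOrder t) {x : F} (hx : x ≠ 0)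
    (M N : ℕ) (l : ℤ) :
    finiteTripleTerm t x M (N + 1) l =
      finiteTripleTerm t x M N l + x⁻¹ * t ^ N * finiteTripleTerm t x M N (l + 1) := by
  have hexp : t ^ (N + 1 + l : ℤ) * t ^ triangular l = t ^ N * t ^ triangular (l + 1) := by
    rw [triangular_add_one, ← zpow_natCast, ← zpow_add₀ ht₀, ← zpow_add₀ ht₀]
    congr 1
    ring
  have hpred : (N + 1 + l - 1 : ℤ) = N + l := by ring
  have hsucc : (N + (l + 1) : ℤ) = N + 1 + l := by ring
  simp only [finiteTripleTerm, ← add_assoc M N, Nat.cast_succ, gaussianBinom_succ' ht₀ ht, hpred,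
    hsucc, zpow_add_one₀ hx]
  linear_combination gaussianBinom t (M + N) (N + 1 + l) * x ^ l * hexp -
    gaussianBinom t (M + N) (N + 1 + l) * x ^ l * t ^ N * t ^ triangular (l + 1) *
      mul_inv_cancel₀ hx

lemma finiteTripleTerm_zero_zero (x : F) (l : ℤ) :
    finiteTripleTerm t x 0 0 l = if l = 0 then 1 else 0 := by
  rcases eq_or_ne l 0 with rfl | hl <;> simp [finiteTripleTerm, gaussianBinom_zero, triangular, *]

theorem hasSum_finiteTripleTerm [TopologicalSpace F] [IsTopologicalRing F] (ht₀ : t ≠ 0)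
    (ht : ¬IsOfFinOrder t) {x : F} (hx : x ≠ 0) (M N : ℕ) :
    HasSum (finiteTripleTerm t x M N)
      (qPochhammer (-(x * t)) t M * qPochhammer (-x⁻¹) t N) := by
  induction N with
  | zero =>
    induction M with
    | zero =>
      have hone := hasSum_ite_eq (0 : ℤ) (1 : F)
      simp only [← finiteTripleTerm_zero_zero (t := t) x] at hone
      simpa [qPochhammer] using hone
    | succ M ih =>
      have hshift := ((Equiv.subRight (1 : ℤ)).hasSum_iff.2 ih).mul_left (x * t ^ (M + 1))
      convert ih.add hshift using 1
      · exact funext (finiteTripleTerm_succ_left ht₀ ht hx M 0)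
      · rw [qPochhammer_succ]
        ring
  | succ N ih =>
    have hshift := ((Equiv.addRight (1 : ℤ)).hasSum_iff.2 ih).mul_left (x⁻¹ * t ^ N)
    convert ih.add hshift using 1
    · exact funext (finiteTripleTerm_succ_right ht₀ ht hx M N)
    · rw [qPochhammer_succ]
      ring

end GaussianBinomial

section TripleProduct

variable {𝕜 : Type*} [NormedField 𝕜] {t : 𝕜}

lemma not_isOfFinOrder_of_norm_lt_one (ht : ‖t‖ < 1) : ¬IsOfFinOrder t :=
  fun h => ht.ne h.norm_eq_one

lemma summable_norm_neg_mul_pow (ht : ‖t‖ < 1) (a : 𝕜) :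
    Summable fun k : ℕ => ‖-(a * t ^ k)‖ := by
  simpa only [norm_neg, norm_mul, norm_pow] using
    (summable_geometric_of_lt_one (norm_nonneg t) ht).mul_left ‖a‖

variable [CompleteSpace 𝕜]

lemma tendsto_qPochhammer (ht : ‖t‖ < 1) (a : 𝕜) :
    Tendsto (qPochhammer a t) atTop (𝓝 (qPochhammerInf a t)) := by
  have hmul := multipliable_one_add_of_summable (summable_norm_neg_mul_pow ht a)
  simp only [← sub_eq_add_neg] at hmul
  exact hmul.tendsto_prod_tprod_nat

lemma qPochhammerInf_ne_zero (ht : ‖t‖ < 1) {a : 𝕜} (ha : ∀ k : ℕ, 1 - a * t ^ k ≠ 0) :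
    qPochhammerInf a t ≠ 0 := by
  simp only [sub_eq_add_neg] at ha
  simpa only [qPochhammerInf, sub_eq_add_neg] using
    tprod_one_add_ne_zero_of_summable ha (summable_norm_neg_mul_pow ht a)

lemma qPochhammerInf_self_ne_zero (ht : ‖t‖ < 1) : qPochhammerInf t t ≠ 0 :=
  qPochhammerInf_ne_zero ht (one_sub_mul_pow_ne_zero (not_isOfFinOrder_of_norm_lt_one ht))

lemma tendsto_inv_qPochhammer_self (ht : ‖t‖ < 1) :
    Tendsto (fun n => (qPochhammer t t n)⁻¹) atTop (𝓝 (qPochhammerInf t t)⁻¹) :=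
  (tendsto_qPochhammer ht t).inv₀ (qPochhammerInf_self_ne_zero ht)

lemma tendsto_recipQPochhammer (ht : ‖t‖ < 1) :
    Tendsto (recipQPochhammer t) atTop (𝓝 (qPochhammerInf t t)⁻¹) := by
  have htoNat : Tendsto Int.toNat atTop atTop :=
    tendsto_atTop.2 fun b => (eventually_ge_atTop (b : ℤ)).mono fun n hn => by lia
  refine ((tendsto_inv_qPochhammer_self ht).comp htoNat).congr' ?_
  filter_upwards [eventually_ge_atTop 0] with n hn
  rw [recipQPochhammer, if_pos hn, Function.comp_apply]

lemma exists_norm_gaussianBinom_le (ht : ‖t‖ < 1) : ∃ B, ∀ n k, ‖gaussianBinom t n k‖ ≤ B := by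
  obtain ⟨U, hU⟩ := (Metric.isBounded_range_of_tendsto _ (tendsto_qPochhammer ht t)).exists_norm_le
  obtain ⟨V, hV⟩ :=
    (Metric.isBounded_range_of_tendsto _ (tendsto_inv_qPochhammer_self ht)).exists_norm_le
  rw [Set.forall_mem_range] at hU hV
  have hU₀ : 0 ≤ U := (norm_nonneg _).trans (hU 0)
  have hV₀ : 0 ≤ V := (norm_nonneg _).trans (hV 0)
  have hrecip (n : ℤ) : ‖recipQPochhammer t n‖ ≤ V := by
    rw [recipQPochhammer]
    split_ifs
    · exact hV _
    · rwa [norm_zero]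
  refine ⟨U * V * V, fun n k => ?_⟩
  rw [gaussianBinom, norm_mul, norm_mul]
  gcongr
  exacts [hU n, hrecip _, hrecip _]

lemma tendsto_gaussianBinom_central (ht : ‖t‖ < 1) (l : ℤ) :
    Tendsto (fun N : ℕ => gaussianBinom t (N + N) (N + l)) atTop (𝓝 (qPochhammerInf t t)⁻¹) := by
  have hN : Tendsto (fun N : ℕ => (N : ℤ)) atTop atTop := tendsto_natCast_atTop_atTop
  have hnum := (tendsto_qPochhammer ht t).comp (tendsto_id.atTop_add_atTop tendsto_id)
  have hleft := (tendsto_recipQPochhammer ht).comp (tendsto_atTop_add_const_right _ l hN)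
  have hright := (tendsto_recipQPochhammer ht).comp (tendsto_atTop_add_const_right _ (-l) hN)
  have hlim := (hnum.mul hleft).mul hright
  rw [mul_inv_cancel₀ (qPochhammerInf_self_ne_zero ht), one_mul] at hlim
  refine hlim.congr fun N => ?_
  simp only [gaussianBinom, Function.comp_apply, id_eq]
  congr 2
  push_cast
  ring

theorem jacobi_triple_product (ht₀ : t ≠ 0) (ht : ‖t‖ < 1) {x : 𝕜} (hx : x ≠ 0) :
    ∑' l : ℤ, t ^ triangular l * x ^ l =
      qPochhammerInf t t * (qPochhammerInf (-(x * t)) t * qPochhammerInf (-x⁻¹) t) := by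
  obtain ⟨B, hB⟩ := exists_norm_gaussianBinom_le ht
  have hsum : Tendsto (fun N : ℕ => ∑' l : ℤ, finiteTripleTerm t x N N l) atTop
      (𝓝 (∑' l : ℤ, (qPochhammerInf t t)⁻¹ * (t ^ triangular l * x ^ l))) := by
    refine tendsto_tsum_of_dominated_convergence
      ((summable_norm_zpow_triangular_mul_zpow ht₀ ht x).mul_left B)
      (fun l => (tendsto_gaussianBinom_central ht l).mul_const _)
      (Eventually.of_forall fun N l => ?_)
    rw [finiteTripleTerm, norm_mul]
    gcongr
    exact hB _ _
  have hprod : Tendsto (fun N : ℕ => ∑' l : ℤ, finiteTripleTerm t x N N l) atTop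
      (𝓝 (qPochhammerInf (-(x * t)) t * qPochhammerInf (-x⁻¹) t)) := by
    simp only [(hasSum_finiteTripleTerm ht₀ (not_isOfFinOrder_of_norm_lt_one ht) hx _ _).tsum_eq]
    exact (tendsto_qPochhammer ht _).mul (tendsto_qPochhammer ht _)
  rw [← tendsto_nhds_unique hsum hprod, tsum_mul_left,
    mul_inv_cancel_left₀ (qPochhammerInf_self_ne_zero ht)]

end TripleProduct

section Theta

variable {p : ℂ}

lemma ne_zero_of_one_lt_norm (hp : 1 < ‖p‖) : p ≠ 0 := norm_pos_iff.1 (zero_lt_one.trans hp)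

lemma norm_inv_lt_one (hp : 1 < ‖p‖) : ‖p⁻¹‖ < 1 := by
  rw [norm_inv]
  exact inv_lt_one_of_one_lt₀ hp

lemma theta_eq_tsum (p z : ℂ) : theta p z = ∑' l : ℤ, p⁻¹ ^ triangular l * z ^ l := by
  simp only [theta, inv_zpow', triangular]

lemma summable_norm_theta (hp : 1 < ‖p‖) (z : ℂ) :
    Summable fun l : ℤ => ‖p⁻¹ ^ triangular l * z ^ l‖ :=
  summable_norm_zpow_triangular_mul_zpow (inv_ne_zero (ne_zero_of_one_lt_norm hp))
    (norm_inv_lt_one hp) z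

theorem theta_ne_zero (hp : 1 < ‖p‖) {x : ℂ} (hx : x ≠ 0) (h : ∀ k : ℤ, x ≠ -p ^ k) :
    theta p x ≠ 0 := by
  have hp₀ := ne_zero_of_one_lt_norm hp
  have ht := norm_inv_lt_one hp
  rw [theta_eq_tsum, jacobi_triple_product (inv_ne_zero hp₀) ht hx]
  refine mul_ne_zero (qPochhammerInf_self_ne_zero ht) (mul_ne_zero
    (qPochhammerInf_ne_zero ht fun k hk => h (k + 1) ?_)
    (qPochhammerInf_ne_zero ht fun k hk => h (-k) ?_))
  · rw [zpow_add_one₀ hp₀, zpow_natCast]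
    rw [inv_pow] at hk
    field_simp at hk
    linear_combination hk
  · rw [zpow_neg, zpow_natCast, ← inv_pow]
    field_simp at hk
    linear_combination hk

theorem theta_zpow_mul (hp : p ≠ 0) {w : ℂ} (hw : w ≠ 0) (i : ℤ) :
    theta p (p ^ i * w) = p ^ triangular (i - 1) * w ^ i * theta p w := by
  rw [theta_eq_tsum, theta_eq_tsum, ← tsum_mul_left]
  refine .trans (tsum_congr fun l => ?_) ((Equiv.subRight i).tsum_eq _)
  have hpow : p⁻¹ ^ triangular l * p ^ (i * l) =
      p ^ triangular (i - 1) * p⁻¹ ^ triangular (l - i) := by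
    rw [inv_zpow', inv_zpow', ← zpow_add₀ hp, ← zpow_add₀ hp, triangular_sub l]
    congr 1
    ring
  have hw' : w ^ l = w ^ i * w ^ (l - i) := by rw [← zpow_add₀ hw, add_sub_cancel]
  rw [Equiv.subRight_apply, mul_zpow, ← zpow_mul, hw']
  linear_combination w ^ i * w ^ (l - i) * hpow

variable {Q x : ℝ}

lemma summable_thetaR (hQ : 1 < Q) (x : ℝ) :
    Summable fun l : ℤ => Q ^ (-triangular l) * x ^ l := by
  have hQ₀ := zero_lt_one.trans hQ
  have ht : ‖Q⁻¹‖ < 1 := by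
    rw [Real.norm_of_nonneg (inv_pos.2 hQ₀).le]
    exact inv_lt_one_of_one_lt₀ hQ
  simpa only [inv_zpow'] using
    (summable_norm_zpow_triangular_mul_zpow (inv_ne_zero hQ₀.ne') ht x).of_norm

lemma thetaR_term_nonneg (hQ : 0 ≤ Q) (hx : 0 ≤ x) (l : ℤ) : 0 ≤ Q ^ (-triangular l) * x ^ l :=
  mul_nonneg (zpow_nonneg hQ _) (zpow_nonneg hx _)

lemma thetaR_pos (hQ : 1 < Q) (hx : 0 ≤ x) : 0 < thetaR Q x :=
  (summable_thetaR hQ x).tsum_pos (thetaR_term_nonneg (zero_lt_one.trans hQ).le hx) 0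
    (by simp [triangular])

end Theta

/-- The `q`-Borel transform of order `1` and base `p` of the power series `∑ aₙ zⁿ`, as a function.
By `qpow_coeff`, the transform of order `μ` and base `q` is the one of order `1` and base
`q ^ (1 / μ)`. -/
noncomputable def qBorel (p : ℂ) (a : ℕ → ℂ) (ζ : ℂ) : ℂ :=
  ∑' n : ℕ, a n * p ^ (-triangular ((n : ℤ) - 1)) * ζ ^ n

section Borel

lemma differentiable_tsum_mul_pow {c : ℕ → ℂ} (hc : ∀ ζ : ℂ, Summable fun n => ‖c n * ζ ^ n‖) :
    Differentiable ℂ fun ζ => ∑' n, c n * ζ ^ n := by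
  intro ζ
  have hdiff := Complex.differentiableOn_tsum_of_summable_norm
    (F := fun n (w : ℂ) => c n * w ^ n) (U := Metric.ball 0 (‖ζ‖ + 1)) (hc (‖ζ‖ + 1 : ℝ))
    (fun n => by fun_prop) Metric.isOpen_ball fun n w hw => by
      have hw : ‖w‖ ≤ ‖ζ‖ + 1 := (mem_ball_zero_iff.1 hw).le
      rw [norm_mul, norm_mul, norm_pow, norm_pow, Complex.norm_of_nonneg (by positivity)]
      gcongr
  exact hdiff.differentiableAt (Metric.isOpen_ball.mem_nhds (by simp))

variable {p : ℂ} {a : ℕ → ℂ} {ρ C : ℝ}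

lemma norm_qBorel_term_le (hp : p ≠ 0) (hρ : 0 < ρ) (ha : ∀ n, ‖a n‖ * ρ ^ n ≤ C) (ζ : ℂ) (n : ℕ) :
    ‖a n * p ^ (-triangular ((n : ℤ) - 1)) * ζ ^ n‖ ≤
      C * (‖p‖ ^ (-triangular n) * (‖p‖ / ρ * ‖ζ‖) ^ (n : ℤ)) := by
  have hp' : 0 < ‖p‖ := norm_pos_iff.2 hp
  calc ‖a n * p ^ (-triangular ((n : ℤ) - 1)) * ζ ^ n‖
      = ‖a n‖ * ‖p‖ ^ (-triangular ((n : ℤ) - 1)) * ‖ζ‖ ^ n := by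
        rw [norm_mul, norm_mul, norm_zpow, norm_pow]
    _ ≤ C / ρ ^ n * ‖p‖ ^ (-triangular ((n : ℤ) - 1)) * ‖ζ‖ ^ n := by
        gcongr
        exact (le_div_iff₀ (pow_pos hρ n)).2 (ha n)
    _ = C * (‖p‖ ^ (-triangular n) * (‖p‖ / ρ * ‖ζ‖) ^ (n : ℤ)) := by
        rw [triangular_sub_one, neg_sub, sub_eq_neg_add, zpow_add₀ hp'.ne', zpow_natCast,
          zpow_natCast, mul_pow, div_pow]
        ring

lemma summable_norm_qBorel (hp : 1 < ‖p‖) (hρ : 0 < ρ) (ha : ∀ n, ‖a n‖ * ρ ^ n ≤ C) (ζ : ℂ) :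
    Summable fun n : ℕ => ‖a n * p ^ (-triangular ((n : ℤ) - 1)) * ζ ^ n‖ :=
  .of_nonneg_of_le (fun _ => norm_nonneg _)
    (norm_qBorel_term_le (ne_zero_of_one_lt_norm hp) hρ ha ζ)
    (((summable_thetaR hp (‖p‖ / ρ * ‖ζ‖)).comp_injective Nat.cast_injective).mul_left C)

lemma norm_qBorel_le (hp : 1 < ‖p‖) (hρ : 0 < ρ) (ha : ∀ n, ‖a n‖ * ρ ^ n ≤ C) (ζ : ℂ) :
    ‖qBorel p a ζ‖ ≤ C * thetaR ‖p‖ (‖p‖ / ρ * ‖ζ‖) := by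
  have hC : 0 ≤ C := (by positivity : 0 ≤ ‖a 0‖ * ρ ^ 0).trans (ha 0)
  have htheta := summable_thetaR hp (‖p‖ / ρ * ‖ζ‖)
  have hnat := htheta.comp_injective Nat.cast_injective
  calc ‖qBorel p a ζ‖
      ≤ ∑' n : ℕ, ‖a n * p ^ (-triangular ((n : ℤ) - 1)) * ζ ^ n‖ :=
        norm_tsum_le_tsum_norm (summable_norm_qBorel hp hρ ha ζ)
    _ ≤ ∑' n : ℕ, C * (‖p‖ ^ (-triangular n) * (‖p‖ / ρ * ‖ζ‖) ^ (n : ℤ)) :=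
        (summable_norm_qBorel hp hρ ha ζ).tsum_le_tsum
          (norm_qBorel_term_le (ne_zero_of_one_lt_norm hp) hρ ha ζ) (hnat.mul_left C)
    _ = C * ∑' n : ℕ, ‖p‖ ^ (-triangular n) * (‖p‖ / ρ * ‖ζ‖) ^ (n : ℤ) := tsum_mul_left
    _ ≤ C * thetaR ‖p‖ (‖p‖ / ρ * ‖ζ‖) :=
        mul_le_mul_of_nonneg_left (hnat.tsum_le_tsum_of_inj _ Nat.cast_injective
          (fun l _ => thetaR_term_nonneg (norm_nonneg p) (by positivity) l)
          (fun _ => le_rfl) htheta) hC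

lemma differentiable_qBorel (hp : 1 < ‖p‖) (hρ : 0 < ρ) (ha : ∀ n, ‖a n‖ * ρ ^ n ≤ C) :
    Differentiable ℂ (qBorel p a) :=
  differentiable_tsum_mul_pow (summable_norm_qBorel hp hρ ha)

end Borel

section Laplace

lemma hasSum_mul_of_summable_norm {R ι κ : Type*} [NormedRing R] [CompleteSpace R] {f : ι → R}
    {g : κ → R} (hf : Summable fun i => ‖f i‖) (hg : Summable fun j => ‖g j‖) :
    HasSum (fun x : ι × κ => f x.1 * g x.2) ((∑' i, f i) * ∑' j, g j) :=
  hf.of_norm.hasSum.mul hg.of_norm.hasSum (summable_mul_of_summable_norm hf hg)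

variable {p w : ℂ}

lemma laplace_monomial (hp : p ≠ 0) (hw : w ≠ 0) (hθ : theta p w ≠ 0) (b z : ℂ) (n : ℕ) (i : ℤ) :
    b * p ^ (-triangular ((n : ℤ) - 1)) * (p ^ i * (w * z)) ^ n / theta p (p ^ (i + 1) * w) =
      b * z ^ n * (p⁻¹ ^ triangular (n - 1 - i) * w ^ (n - 1 - i : ℤ)) / theta p w := by
  have hpow : p ^ (-triangular ((n : ℤ) - 1)) * p ^ (i * n) =
      p⁻¹ ^ triangular (n - 1 - i) * p ^ triangular i := by
    rw [inv_zpow', ← zpow_add₀ hp, ← zpow_add₀ hp, triangular_sub (n - 1),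
      triangular_sub_one i]
    congr 1
    ring
  have hw' : w ^ n = w ^ (n - 1 - i : ℤ) * w ^ (i + 1) := by
    rw [← zpow_add₀ hw, ← zpow_natCast]
    congr 1
    ring
  rw [theta_zpow_mul hp hw, add_sub_cancel_right, div_eq_div_iff (by positivity) hθ, mul_pow,
    mul_pow, ← zpow_natCast (p ^ i), ← zpow_mul, hw']
  linear_combination b * z ^ n * w ^ (n - 1 - i : ℤ) * w ^ (i + 1) * theta p w * hpow

/-- The reindexing `(i, n) ↦ (n, n - 1 - i)` under which the terms of the `q`-Laplace transform of a
`q`-Borel transform become products of terms of a power series and of a theta series. -/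
def laplaceReindex : ℤ × ℕ ≃ ℕ × ℤ where
  toFun x := (x.2, x.2 - 1 - x.1)
  invFun y := (y.1 - 1 - y.2, y.1)
  left_inv x := by ext <;> simp
  right_inv y := by ext <;> simp

theorem hasSum_laplace_qBorel (hp : 1 < ‖p‖) (hw : w ≠ 0) (hθ : theta p w ≠ 0) {a : ℕ → ℂ} {z : ℂ}
    (hz : z ≠ 0) (ha : Summable fun n => ‖a n * z ^ n‖) :
    HasSum (fun i : ℤ => qBorel p a (p ^ i * (w * z)) / theta p (p ^ (i + 1) * w))
      (∑' n, a n * z ^ n) := by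
  have hprod : HasSum (fun x : ℕ × ℤ => a x.1 * z ^ x.1 * (p⁻¹ ^ triangular x.2 * w ^ x.2))
      ((∑' n, a n * z ^ n) * theta p w) := by
    rw [theta_eq_tsum]
    exact hasSum_mul_of_summable_norm (f := fun n => a n * z ^ n)
      (g := fun l : ℤ => p⁻¹ ^ triangular l * w ^ l) ha (summable_norm_theta hp w)
  have hdouble : HasSum (fun x : ℤ × ℕ => a x.2 * p ^ (-triangular ((x.2 : ℤ) - 1)) *
      (p ^ x.1 * (w * z)) ^ x.2 / theta p (p ^ (x.1 + 1) * w)) (∑' n, a n * z ^ n) := by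
    have hquot := laplaceReindex.hasSum_iff.2 (hprod.div_const (theta p w))
    rw [mul_div_cancel_right₀ _ hθ] at hquot
    exact hquot.congr_fun fun x =>
      laplace_monomial (ne_zero_of_one_lt_norm hp) hw hθ (a x.2) z x.2 x.1
  have hbound (n : ℕ) : ‖a n‖ * ‖z‖ ^ n ≤ ∑' k, ‖a k * z ^ k‖ := by
    rw [← norm_pow, ← norm_mul]
    exact ha.le_tsum n fun _ _ => norm_nonneg _
  have hborel := summable_norm_qBorel hp (norm_pos_iff.2 hz) hbound
  refine hdouble.prod_fiberwise fun i => ?_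
  simpa only [qBorel] using
    (hborel (p ^ i * (w * z))).of_norm.hasSum.div_const (theta p (p ^ (i + 1) * w))

end Laplace

section ResidueClasses

variable {α : Type*} [AddCommMonoid α] [TopologicalSpace α] [ContinuousAdd α]

lemma hasSum_prod_of_fintype {ι β : Type*} [Fintype ι] {f : ι × β → α} {s : ι → α}
    (h : ∀ i, HasSum (fun b => f (i, b)) (s i)) : HasSum f (∑ i, s i) := by
  classical
  have hslice (i : ι) : HasSum (fun x : ι × β => if x.1 = i then f x else 0) (s i) := by
    rw [← (Prod.mk_right_injective i).hasSum_iff]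
    · simpa [Function.comp_def] using h i
    · rintro ⟨j, b⟩ hx
      exact if_neg fun hj : j = i => hx ⟨b, by rw [hj]⟩
  simpa using hasSum_sum fun i (_ : i ∈ univ) => hslice i

lemma hasSum_int_of_residues {m : ℕ} [NeZero m] {f : ℤ → α} {s : Fin m → α}
    (h : ∀ r : Fin m, HasSum (fun i : ℤ => f (i * m + (r : ℕ))) (s r)) : HasSum f (∑ r, s r) :=
  ((Equiv.prodComm _ _).trans (Int.divModEquiv m).symm).hasSum_iff.1 (hasSum_prod_of_fintype h)

end ResidueClasses

section RationalPowers

lemma qpow_add (q : ℂ) (x y : ℚ) : qpow q (x + y) = qpow q x * qpow q y := by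
  rw [qpow, qpow, qpow, ← Complex.exp_add, ← add_mul, Rat.cast_add]

lemma qpow_zpow (q : ℂ) (x : ℚ) (k : ℤ) : qpow q x ^ k = qpow q (k * x) := by
  rw [qpow, qpow, ← Complex.exp_int_mul, ← mul_assoc, Rat.cast_mul, Rat.cast_intCast]

lemma qpow_ne_zero (q : ℂ) (x : ℚ) : qpow q x ≠ 0 :=
  Complex.exp_ne_zero _

lemma norm_qpow {q : ℂ} (hq : q ≠ 0) (x : ℚ) : ‖qpow q x‖ = qpowR ‖q‖ x := by
  rw [qpow, qpowR, Complex.norm_exp, Real.rpow_def_of_pos (norm_pos_iff.2 hq), ← Complex.log_re,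
    ← Complex.ofReal_ratCast, Complex.re_ofReal_mul, mul_comm]

lemma one_lt_norm_qpow {q : ℂ} (hq : 1 < ‖q‖) {x : ℚ} (hx : 0 < x) : 1 < ‖qpow q x‖ := by
  rw [norm_qpow (ne_zero_of_one_lt_norm hq), qpowR]
  exact Real.one_lt_rpow hq (Rat.cast_pos.2 hx)

lemma qpow_coeff (q : ℂ) (μ : ℚ) (n : ℕ) :
    qpow q (-(n * (n - 1) : ℚ) / (2 * μ)) = qpow q (1 / μ) ^ (-triangular ((n : ℤ) - 1)) := by
  have htri : (n * (n - 1) : ℚ) = 2 * (triangular ((n : ℤ) - 1) : ℤ) := by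
    have h := two_mul_triangular ((n : ℤ) - 1)
    rw [sub_add_cancel, mul_comm ((n : ℤ) - 1)] at h
    exact_mod_cast h.symm
  rw [qpow_zpow, htri, neg_div, mul_div_mul_left _ _ two_ne_zero, Int.cast_neg, neg_mul,
    mul_one_div]

end RationalPowers

lemma memH_of_differentiable {q : ℂ} {μ : ℚ} (K : ℕ) (lam : ℂ) {f : ℂ → ℂ}
    (hf : Differentiable ℂ f) {L M : ℝ} (hL : 0 < L) (hM : 0 < M)
    (h : ∀ z, ‖f z‖ < L * thetaR (qpowR ‖q‖ (1 / μ)) (M * ‖z‖)) : memH q μ K lam f :=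
  have han := Complex.analyticOnNhd_univ_iff_differentiable.2 hf
  ⟨⟨1, one_pos, fun z _ => (han z trivial).meromorphicAt⟩, 1, one_pos, Set.univ, isOpen_univ,
    isConnected_univ, Set.subset_univ _, han, L, hL, M, hM, fun z _ => h z⟩

theorem memH_qBorel {q : ℂ} (hq : 1 < ‖q‖) {μ : ℚ} (hμ : 0 < μ) (K : ℕ) (lam : ℂ) {a : ℕ → ℂ}
    {ρ C : ℝ} (hρ : 0 < ρ) (ha : ∀ n, ‖a n‖ * ρ ^ n ≤ C) :
    memH q μ K lam (qBorel (qpow q (1 / μ)) a) := by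
  have hp := one_lt_norm_qpow hq (one_div_pos.2 hμ)
  have hC : 0 ≤ C := (by positivity : 0 ≤ ‖a 0‖ * ρ ^ 0).trans (ha 0)
  refine memH_of_differentiable K lam (differentiable_qBorel hp hρ ha) (L := C + 1)
    (M := ‖qpow q (1 / μ)‖ / ρ) (by positivity) (by positivity) fun z => ?_
  rw [← norm_qpow (ne_zero_of_one_lt_norm hq)]
  refine (norm_qBorel_le hp hρ ha z).trans_lt ?_
  gcongr
  · exact thetaR_pos hp (by positivity)
  · exact lt_add_one C

section Inversion

variable {q : ℂ} {μ : ℚ} {K m : ℕ}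

lemma qpow_residue (hm : m ≠ 0) (hK : (K : ℚ) = μ * m) (i r : ℤ) :
    qpow q (((i * m + r : ℤ) : ℚ) / K) = qpow q (1 / μ) ^ i * qpow q (r / K) := by
  rw [qpow_zpow, ← qpow_add, hK]
  congr 1
  push_cast
  field_simp

variable {lam z : ℂ} {a : ℕ → ℂ}

lemma theta_qpow_ne_zero (hq : 1 < ‖q‖) (hμ : 0 < μ) (hm : m ≠ 0) (hK : (K : ℚ) = μ * m)
    (hlam : lam ≠ 0) (hz : z ≠ 0) (hspiral : ∀ j : ℤ, z ≠ -(qpow q ((j : ℚ) / K) * lam)) (r : ℤ) :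
    theta (qpow q (1 / μ)) (qpow q (r / K) * lam / z) ≠ 0 := by
  have hp₀ := qpow_ne_zero q (1 / μ)
  refine theta_ne_zero (one_lt_norm_qpow hq (one_div_pos.2 hμ))
    (div_ne_zero (mul_ne_zero (qpow_ne_zero q _) hlam) hz) fun k hk => hspiral (-k * m + r) ?_
  rw [div_eq_iff hz] at hk
  rw [qpow_residue hm hK, mul_assoc, hk, neg_mul, mul_neg, neg_neg, zpow_neg,
    inv_mul_cancel_left₀ (zpow_ne_zero k hp₀)]

lemma hasSum_qLaplace_residue (hq : 1 < ‖q‖) (hμ : 0 < μ) (hm : m ≠ 0) (hK : (K : ℚ) = μ * m)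
    (hlam : lam ≠ 0) (hz : z ≠ 0) (hspiral : ∀ j : ℤ, z ≠ -(qpow q ((j : ℚ) / K) * lam))
    (ha : Summable fun n => ‖a n * z ^ n‖) (r : ℤ) :
    HasSum (fun i : ℤ => qBorel (qpow q (1 / μ)) a (qpow q (((i * m + r : ℤ) : ℚ) / K) * lam) /
      theta (qpow q (1 / μ)) (qpow q (1 / μ + ((i * m + r : ℤ) : ℚ) / K) * lam / z))
      (∑' n, a n * z ^ n) := by
  refine (hasSum_laplace_qBorel (one_lt_norm_qpow hq (one_div_pos.2 hμ))
    (div_ne_zero (mul_ne_zero (qpow_ne_zero q (r / K)) hlam) hz)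
    (theta_qpow_ne_zero hq hμ hm hK hlam hz hspiral r) hz ha).congr_fun fun i => ?_
  have harg : qpow q (1 / μ + ((i * m + r : ℤ) : ℚ) / K) * lam / z =
      qpow q (1 / μ) ^ (i + 1) * (qpow q (r / K) * lam / z) := by
    rw [qpow_add, qpow_residue hm hK, zpow_add_one₀ (qpow_ne_zero q _)]
    ring
  rw [harg, div_mul_cancel₀ _ hz, qpow_residue hm hK, mul_assoc]

theorem qLaplace_qBorel (hq : 1 < ‖q‖) (hμ : 0 < μ) (hm : m ≠ 0) (hK : (K : ℚ) = μ * m)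
    (hlam : lam ≠ 0) (hz : z ≠ 0) (hspiral : ∀ j : ℤ, z ≠ -(qpow q ((j : ℚ) / K) * lam))
    (ha : Summable fun n => ‖a n * z ^ n‖) :
    qLaplace q μ K lam (qBorel (qpow q (1 / μ)) a) z = ∑' n, a n * z ^ n := by
  have : NeZero m := ⟨hm⟩
  have hsum : HasSum (fun j : ℤ => qBorel (qpow q (1 / μ)) a (qpow q (j / K) * lam) /
      theta (qpow q (1 / μ)) (qpow q (1 / μ + j / K) * lam / z))
      (∑ _ : Fin m, ∑' n, a n * z ^ n) :=
    hasSum_int_of_residues fun r =>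
      hasSum_qLaplace_residue hq hμ hm hK hlam hz hspiral ha (r : ℕ)
  have hK' : (K : ℂ) = μ * m := by exact_mod_cast congrArg (Rat.cast : ℚ → ℂ) hK
  have hμ' : (μ : ℂ) ≠ 0 := Rat.cast_ne_zero.2 hμ.ne'
  have hm' : (m : ℂ) ≠ 0 := Nat.cast_ne_zero.2 hm
  rw [qLaplace, hsum.tsum_eq, sum_const, card_univ, Fintype.card_fin, nsmul_eq_mul, hK']
  field_simp

end Inversion

/-- if `f = ∑ aₙ zⁿ` is a convergent power series, then its `q`-Borel
transform `B̂_μ(f)(ζ) = ∑ aₙ q^{-n(n-1)/(2μ)} ζⁿ` defines an entire function belonging to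
`ℍ^{[λ]}_{μ,K}` for every `λ ∈ ℂ*`, and `L^{[λ]}_{μ,K}(B̂_μ(f)) = f` near `0`
off the spiral `-λq^{K⁻¹ℤ}`. -/
theorem qLaplace_qBorel_convergent (q : ℂ) (hq : 1 < ‖q‖) (μ : ℚ) (hμ : 0 < μ)
    (K : ℕ) (hK : 0 < K) (hKμ : ∃ m : ℕ, 0 < m ∧ (K : ℚ) = μ * m)
    (lam : ℂ) (hlam : lam ≠ 0) (a : ℕ → ℂ)
    (ha : ∃ ρ : ℝ, 0 < ρ ∧ Summable fun n : ℕ => ‖a n‖ * ρ ^ n) :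
    (∀ ζ : ℂ, Summable fun n : ℕ =>
      ‖a n * qpow q (-(n * (n - 1) : ℚ) / (2 * μ)) * ζ ^ n‖) ∧
    AnalyticOnNhd ℂ
      (fun ζ : ℂ => ∑' n : ℕ, a n * qpow q (-(n * (n - 1) : ℚ) / (2 * μ)) * ζ ^ n)
      Set.univ ∧
    memH q μ K lam
      (fun ζ : ℂ => ∑' n : ℕ, a n * qpow q (-(n * (n - 1) : ℚ) / (2 * μ)) * ζ ^ n) ∧
    ∃ r > 0, ∀ z : ℂ, z ≠ 0 → ‖z‖ < r →
      (∀ j : ℤ, z ≠ -(qpow q ((j : ℚ) / K) * lam)) →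
      qLaplace q μ K lam
        (fun ζ : ℂ => ∑' n : ℕ, a n * qpow q (-(n * (n - 1) : ℚ) / (2 * μ)) * ζ ^ n) z
        = ∑' n : ℕ, a n * z ^ n := by
  obtain ⟨ρ, hρ, hsum⟩ := ha
  obtain ⟨m, hm, hKm⟩ := hKμ
  have hp := one_lt_norm_qpow hq (one_div_pos.2 hμ)
  have hbound (n : ℕ) : ‖a n‖ * ρ ^ n ≤ ∑' k, ‖a k‖ * ρ ^ k :=
    hsum.le_tsum n fun _ _ => by positivity
  simp only [qpow_coeff]
  refine ⟨summable_norm_qBorel hp hρ hbound, Complex.analyticOnNhd_univ_iff_differentiable.2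
    (differentiable_qBorel hp hρ hbound), memH_qBorel hq hμ K lam hρ hbound, ρ, hρ,
    fun z hz hzρ hspiral => qLaplace_qBorel hq hμ hm.ne' hKm hlam hz hspiral ?_⟩
  refine hsum.of_nonneg_of_le (fun _ => norm_nonneg _) fun n => ?_
  rw [norm_mul, norm_pow]
  gcongr
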